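/- arXiv:1204.1622 — 3 statements merged into one kernel-verified Lean document; each statement's English description precedes it below -/
import Mathlib

section
/- Let K be a field of prime characteristic p, and let δ be the derivation of the polynomial ring K[x,y,z] determined on the generators by δ(x) = x^p − x, δ(y) = y^p − y, δ(z) = z^p − z. Then the p-fold iterate of δ equals δ itself as a linear endomorphism of K[x,y,z]; in particular δ is p-closed (δ^p = f·δ with f = 1). -/
open MvPolynomial

theorem derivation_iterate_char_mul {K A : Type*} [Field K] [CommRing A] [Nontrivial A]
    [Algebra K A] (p : ℕ) (hp : p.Prime) [CharP K p] (δ : Derivation K A A) (a b : A) :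
    (⇑δ)^[p] (a * b) = a * (⇑δ)^[p] b + (⇑δ)^[p] a * b := by
  have : Fact p.Prime := ⟨hp⟩
  let E := Module.End K A
  let d : E := (δ : A →ₗ[K] A)
  have : Nontrivial E := inferInstanceAs (Nontrivial (Module.End K A))
  have : CharP (Module.End K E) p :=
    charP_of_injective_algebraMap (algebraMap K (Module.End K E)).injective p
  let T : Module.End K E := LinearMap.mulLeft K d - LinearMap.mulRight K d
  have hT : T ^ p = LinearMap.mulLeft K (d ^ p) - LinearMap.mulRight K (d ^ p) := by
    have hc : Commute (LinearMap.mulLeft K d : Module.End K E) (LinearMap.mulRight K d) :=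
      LinearMap.commute_mulLeft_right d d
    have h1 : T ^ p = (LinearMap.mulLeft K d : Module.End K E) ^ p
        - (LinearMap.mulRight K d : Module.End K E) ^ p :=
      sub_pow_char_of_commute (R := Module.End K E) (p := p) hc
    rw [h1, LinearMap.pow_mulLeft, LinearMap.pow_mulRight]
  have hL : ∀ c : A, T (LinearMap.mulLeft K c) = LinearMap.mulLeft K (δ c) := by
    intro c
    refine LinearMap.ext fun x => ?_
    change δ (c * x) - c * δ x = δ c * x
    rw [δ.leibniz, smul_eq_mul, smul_eq_mul]
    ring
  have hn : ∀ (n : ℕ) (c : A),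
      (T ^ n) (LinearMap.mulLeft K c) = LinearMap.mulLeft K ((⇑δ)^[n] c) := by
    intro n
    induction n with
    | zero => intro c; rfl
    | succ n ih =>
      intro c
      rw [pow_succ, Module.End.mul_apply, hL, ih, Function.iterate_succ_apply]
  have h := hn p a
  rw [hT] at h
  have h2 := LinearMap.congr_fun h b
  have hd : ∀ x, (d ^ p) x = (⇑δ)^[p] x := fun x => Module.End.pow_apply d p x
  change (d ^ p) (a * b) - a * (d ^ p) b = (⇑δ)^[p] a * b at h2
  rw [hd, hd] at h2
  rw [← h2]; ring

/-- Let `K` be a field of prime characteristic `p` and let `δ` be the derivation of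
`K[x,y,z]` with `δ(x) = x^p - x`, `δ(y) = y^p - y`, `δ(z) = z^p - z` (the Hirokado
derivation).  Then the `p`-fold iterate of `δ` equals `δ` itself; in particular `δ`
is `p`-closed with `δ^p = 1 ⋅ δ`. -/
theorem hirokado_derivation_p_closed
    {K : Type*} [Field K] (p : ℕ) (hp : p.Prime) [CharP K p]
    (δ : Derivation K (MvPolynomial (Fin 3) K) (MvPolynomial (Fin 3) K))
    (hδ : δ = MvPolynomial.mkDerivation K
      (fun i : Fin 3 => (X i : MvPolynomial (Fin 3) K) ^ p - X i)) :
    (⇑δ)^[p] = ⇑δ := by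
  have : Fact p.Prime := ⟨hp⟩
  have hX : ∀ i, δ (X i) = X i ^ p - X i := by
    intro i; rw [hδ, mkDerivation_X]
  have hXp : ∀ i, δ (X i ^ p - X i) = - (X i ^ p - X i) := by
    intro i
    rw [map_sub, δ.leibniz_pow, hX, ← Nat.cast_smul_eq_nsmul K, CharP.cast_eq_zero, zero_smul,
      zero_sub]
  have hit : ∀ (n : ℕ) i, (⇑δ)^[n + 1] (X i) = (-1) ^ n * (X i ^ p - X i) := by
    intro n i
    induction n with
    | zero => simp [hX]
    | succ n ih =>
      rw [Function.iterate_succ_apply', ih]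
      have : ((-1) ^ n * (X i ^ p - X i) : MvPolynomial (Fin 3) K)
          = ((-1 : K) ^ n) • (X i ^ p - X i) := by
        rw [smul_eq_C_mul]; simp
      rw [this, δ.map_smul, hXp, smul_eq_C_mul]
      simp only [map_pow, map_neg, map_one]
      ring
  have hsign : ((-1) ^ (p - 1) : MvPolynomial (Fin 3) K) = 1 := by
    rcases hp.eq_two_or_odd' with h | h
    · subst h
      have : (2 : MvPolynomial (Fin 3) K) = 0 := by
        exact_mod_cast CharP.cast_eq_zero (MvPolynomial (Fin 3) K) 2
      linear_combination -this
    · exact (Nat.Odd.sub_odd h odd_one).neg_one_pow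
  let D : Derivation K (MvPolynomial (Fin 3) K) (MvPolynomial (Fin 3) K) :=
    Derivation.mk' ((δ : MvPolynomial (Fin 3) K →ₗ[K] MvPolynomial (Fin 3) K) ^ p) (by
      intro a b
      rw [Module.End.pow_apply, Module.End.pow_apply, Module.End.pow_apply]
      refine (derivation_iterate_char_mul p hp δ a b).trans ?_
      rw [smul_eq_mul, smul_eq_mul, mul_comm _ b]
      rfl)
  have hD : ∀ x, D x = (⇑δ)^[p] x := fun x =>
    Module.End.pow_apply (δ : MvPolynomial (Fin 3) K →ₗ[K] MvPolynomial (Fin 3) K) p x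
  have hDδ : D = δ := by
    apply derivation_ext
    intro i
    rw [hD, hX]
    have := hit (p - 1) i
    rw [Nat.sub_add_cancel hp.one_le, hsign, one_mul] at this
    exact this
  funext x
  rw [← hD, hDδ]
end

section
/- Let K be an algebraically closed field of prime characteristic p and let u, v ∈ K^4 be linearly independent, with Plücker coordinates p_{ij} := u_i v_j − u_j v_i. Then the 2-plane W = span{u,v} meets its Frobenius twist F^*W = span{u^{(p)}, v^{(p)}} nontrivially (W ∩ F^*W ≠ {0}) if and only if b(p, p^{(p)}) := p_{01}p_{23}^p − p_{02}p_{13}^p + p_{03}p_{12}^p + p_{23}p_{01}^p − p_{13}p_{02}^p + p_{12}p_{03}^p = 0. Thus the Deligne–Lusztig locus ℱ = {W ∈ Gr(2,4) : W ∩ F^*W ≠ 0} is cut out on the Plücker quadric by a form of degree p+1, so ℱ is a complete intersection of type (2, p+1) in ℙ^5. -/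
/-- Let `K` be an algebraically closed field of prime characteristic `p` and let
`u, v : Fin 4 → K` be linearly independent, with Plücker coordinates
`P i j = u i * v j - u j * v i`.  The 2-plane `W = span {u, v}` meets its Frobenius
twist `F^*W = span {u^(p), v^(p)}` nontrivially if and only if the degree-`(p+1)`
form `b(P, P^(p)) = P01*P23^p - P02*P13^p + P03*P12^p + P23*P01^p - P13*P02^p
+ P12*P03^p` vanishes.  Thus the Deligne–Lusztig locus `ℱ` is cut out on the
Plücker quadric by a form of degree `p + 1`, i.e. `ℱ` is a complete intersection
of type `(2, p+1)` in `ℙ^5`. -/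
theorem deligne_lusztig_locus_eqn
    {K : Type*} [Field K] [IsAlgClosed K] (p : ℕ) (hp : p.Prime) [CharP K p]
    (u v : Fin 4 → K) (huv : LinearIndependent K ![u, v])
    (P : Fin 4 → Fin 4 → K) (hP : ∀ i j, P i j = u i * v j - u j * v i) :
    Submodule.span K {u, v} ⊓
        Submodule.span K {(fun i => u i ^ p), (fun i => v i ^ p)} ≠ ⊥ ↔
      P 0 1 * P 2 3 ^ p - P 0 2 * P 1 3 ^ p + P 0 3 * P 1 2 ^ p
        + P 2 3 * P 0 1 ^ p - P 1 3 * P 0 2 ^ p + P 1 2 * P 0 3 ^ p = 0 := by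
  haveI : Fact p.Prime := ⟨hp⟩
  have hI : ∀ a b : K, (∀ i, a * u i + b * v i = 0) → a = 0 ∧ b = 0 := by
    intro a b h
    refine LinearIndependent.pair_iff.1 huv a b ?_
    funext i
    simpa using h i
  have hI' : ∀ a b : K, (∀ i, a * u i ^ p + b * v i ^ p = 0) → a = 0 ∧ b = 0 := by
    intro a b h
    obtain ⟨c, rfl⟩ := IsAlgClosed.exists_pow_nat_eq a hp.pos
    obtain ⟨d, rfl⟩ := IsAlgClosed.exists_pow_nat_eq b hp.pos
    obtain ⟨h1, h2⟩ := hI c d (fun i => by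
      have h3 : (c * u i + d * v i) ^ p = 0 := by
        rw [add_pow_char, mul_pow, mul_pow]
        exact h i
      exact (pow_eq_zero_iff hp.ne_zero).1 h3)
    simp [h1, h2, hp.ne_zero]
  let M : Matrix (Fin 4) (Fin 4) K :=
    Matrix.of ![u, v, (fun i => u i ^ p), (fun i => v i ^ p)]
  have hdet : M.det = P 0 1 * P 2 3 ^ p - P 0 2 * P 1 3 ^ p + P 0 3 * P 1 2 ^ p
        + P 2 3 * P 0 1 ^ p - P 1 3 * P 0 2 ^ p + P 1 2 * P 0 3 ^ p := by
    simp only [hP, sub_pow_char, mul_pow]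
    simp [M, Matrix.det_succ_row_zero, Fin.sum_univ_succ, Fin.succAbove]
    ring
  have hvm : ∀ w : Fin 4 → K, Matrix.vecMul w M = 0 ↔
      ∀ i, w 0 * u i + w 1 * v i + w 2 * u i ^ p + w 3 * v i ^ p = 0 := by
    intro w
    rw [funext_iff]
    refine forall_congr' fun i => ?_
    simp [M, Matrix.vecMul, dotProduct, Fin.sum_univ_four]
  rw [← hdet, ← Matrix.exists_vecMul_eq_zero_iff, Submodule.ne_bot_iff]
  constructor
  · rintro ⟨x, ⟨hx1, hx2⟩, hx⟩
    obtain ⟨a, b, hab⟩ := Submodule.mem_span_pair.1 hx1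
    obtain ⟨c, d, hcd⟩ := Submodule.mem_span_pair.1 hx2
    refine ⟨![a, b, -c, -d], ?_, ?_⟩
    · intro h
      have h0 := congrFun h 0
      have h1 := congrFun h 1
      simp at h0 h1
      apply hx
      rw [← hab, h0, h1]
      simp
    · rw [hvm]
      intro i
      have h1 := congrFun hab i
      have h2 := congrFun hcd i
      simp at h1 h2 ⊢
      linear_combination h1 - h2
  · rintro ⟨w, hw, hwM⟩
    rw [hvm] at hwM
    refine ⟨w 0 • u + w 1 • v, ⟨Submodule.mem_span_pair.2 ⟨_, _, rfl⟩,
      Submodule.mem_span_pair.2 ⟨-w 2, -w 3, ?_⟩⟩, ?_⟩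
    · funext i
      simp
      linear_combination -hwM i
    · intro h
      have h0 : ∀ i, w 0 * u i + w 1 * v i = 0 := fun i => by simpa using congrFun h i
      obtain ⟨e0, e1⟩ := hI _ _ h0
      obtain ⟨e2, e3⟩ := hI' (w 2) (w 3) (fun i => by
        linear_combination hwM i - h0 i)
      apply hw
      funext i
      fin_cases i <;> simp [e0, e1, e2, e3]
end

section
/- Let K be a field of prime characteristic p. On the polynomial ring K[X_1, X_2, X_3, X_4], let D be the derivation determined by D(X_i) = X_i^p for i = 1, ..., 4. Then the p-fold iterate of D is zero as a linear endomorphism of K[X_1,...,X_4]: D^p = 0. -/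
open MvPolynomial

/-- Let `K` be a field of prime characteristic `p`.  The derivation `D` on
`K[X₁,...,X₄]` determined by `D(Xᵢ) = Xᵢ^p` satisfies `D^p = 0` as a linear
endomorphism; this is closure under `p`-th powers for the generator `D` of the
foliation `⟨Σ Xᵢ^p ∂/∂Xᵢ, Σ Xᵢ ∂/∂Xᵢ⟩`. -/
theorem hirokado_cone_derivation_pth_power_zero
    {K : Type*} [Field K] (p : ℕ) (hp : p.Prime) [CharP K p]
    (D : Derivation K (MvPolynomial (Fin 4) K) (MvPolynomial (Fin 4) K))
    (hD : D = MvPolynomial.mkDerivation K (fun i : Fin 4 => (X i : MvPolynomial (Fin 4) K) ^ p)) :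
    (⇑D)^[p] = fun _ => 0 := by
  have hX : ∀ i, D (X i) = X i ^ p := by intro i; rw [hD, mkDerivation_X]
  have hp0 : ((p : ℕ) : MvPolynomial (Fin 4) K) = 0 := CharP.cast_eq_zero _ p
  have hXp : ∀ i, D (X i ^ p) = 0 := by
    intro i
    rw [D.leibniz_pow, nsmul_eq_mul, hp0, zero_mul]
  have key : ∀ (n : ℕ) (i : Fin 4) (f : MvPolynomial (Fin 4) K),
      (⇑D)^[n + 1] (f * X i) =
        (⇑D)^[n + 1] f * X i + ((n + 1 : ℕ) : MvPolynomial (Fin 4) K) * ((⇑D)^[n] f * X i ^ p) := by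
    intro n i f
    induction n with
    | zero => simp [D.leibniz, hX]; ring
    | succ n ih =>
      rw [Function.iterate_succ_apply', ih]
      rw [Function.iterate_succ_apply' D (n + 1) f]
      rw [map_add, D.leibniz, D.leibniz, D.leibniz, hXp, hX, Derivation.map_natCast,
        ← Function.iterate_succ_apply' D n f]
      simp only [smul_eq_mul]
      push_cast
      ring
  obtain ⟨m, rfl⟩ : ∃ m, p = m + 1 := ⟨p - 1, by have := hp.pos; omega⟩
  have hz : ∀ n, (⇑D)^[n] 0 = 0 := fun n => Function.iterate_fixed (map_zero D) n
  have hadd : ∀ (n : ℕ) (f g : MvPolynomial (Fin 4) K),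
      (⇑D)^[n] (f + g) = (⇑D)^[n] f + (⇑D)^[n] g := fun n f g => iterate_map_add D n f g
  funext f
  induction f using MvPolynomial.induction_on with
  | C a =>
    rw [Function.iterate_succ_apply, ← MvPolynomial.algebraMap_eq, D.map_algebraMap, hz]
  | add f g hf hg => rw [hadd, hf, hg, add_zero]
  | mul_X f i hf => rw [key, hf, hp0, zero_mul, zero_mul, add_zero]
end
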